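/- Let K be a cubic number field, n a positive integer, and ε, δ ∈ O_K^× units with ε + δ = n and δ ∉ ℚ, so that the minimal polynomial of δ over ℚ has the form x³ + a x² + b x + c with a, b ∈ ℤ and c ∈ {1, −1}. Assume n³ + a n² + b n = 0. Then there exist integers n_ε, n_δ ∈ ℤ with n = n_ε + n_δ such that the set consisting of the minimal polynomials of ε and δ over ℚ equals { x³ − (n + n_ε)x² + n·n_ε·x − 1 , x³ − (n + n_δ)x² + n·n_δ·x + 1 }. -/

import Mathlib

open NumberField Polynomial

/-!
The substitution `x ↦ n - x` exchanges the polynomials vanishing at `δ` and at `ε = n - δ`, and it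
preserves degrees. Hence if `f = x³ + ax² + bx + c` is the minimal polynomial of `δ`, then that of
`ε` is `-f(n - x) = x³ - (3n + a)x² + (3n² + 2an + b)x - f(n)`
(`minpoly_of_add_eq_natCast`). The assumption says `f(n) = c`, and after division by `n > 0` it
gives `b = -n(n + a)`. Therefore `f` is `x³ - (n + p)x² + npx + c` with `p = -a - n`, while `-f(n - x)`
is `x³ - (n + q)x² + nqx - c` with `q = 2n + a = n - p`. The sign of `c` only decides which of the
two units carries the constant term `-1`.
-/

/-- The minimal polynomial of `ε = n - δ` is `-f(n - x)`, where `f` is the minimal polynomial of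
`δ`; the coefficients of `-f(n - x)` are written out for a cubic `f`. -/
lemma minpoly_of_add_eq_natCast {R : Type*} [CommRing R] [IsDomain R] [CharZero R]
    {ε δ : R} {n : ℕ} (hsum : ε + δ = n) {a b c : ℤ}
    (hmin : minpoly ℤ δ = X ^ 3 + C a * X ^ 2 + C b * X + C c) :
    minpoly ℤ ε = X ^ 3 - C (3 * n + a) * X ^ 2 + C (3 * n ^ 2 + 2 * a * n + b) * X
      - C (n ^ 3 + a * n ^ 2 + b * n + c) := by
  have hε : ε = n - δ := eq_sub_of_add_eq hsum
  have hroot : δ ^ 3 + a * δ ^ 2 + b * δ + c = 0 := by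
    have h := minpoly.aeval ℤ δ
    rw [hmin] at h
    simpa using h
  symm
  apply IsIntegrallyClosed.minpoly.unique
  · monicity!
  · simp only [map_add, map_sub, map_mul, map_pow, aeval_X, map_natCast, map_ofNat, eq_intCast,
      map_intCast]
    rw [hε]
    linear_combination -hroot
  · intro Q hQ hQε
    have hdeg : (Q.comp (C (n : ℤ) - X)).natDegree = Q.natDegree := by
      have h1 : (C (n : ℤ) - X).natDegree = 1 := by compute_degree!
      rw [natDegree_comp, h1, mul_one]
    -- `x ↦ n - x` is an involution, so composing with it kills no nonzero polynomial.
    have hne : Q.comp (C (n : ℤ) - X) ≠ 0 := by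
      intro h
      have h2 := congrArg (fun P => P.comp (C (n : ℤ) - X)) h
      simp only [comp_assoc, sub_comp, C_comp, X_comp, sub_sub_cancel, comp_X, zero_comp] at h2
      exact hQ.ne_zero h2
    have hle := minpoly.IsIntegrallyClosed.degree_le_of_ne_zero (s := δ) hne (by
      rw [aeval_comp]
      have : aeval δ (C (n : ℤ) - X) = ε := by simp [hε]
      rw [this, hQε])
    have h3 : (X ^ 3 + C a * X ^ 2 + C b * X + C c).degree = 3 := by compute_degree!
    rw [hmin, h3, degree_eq_natDegree hne, hdeg, ← degree_eq_natDegree hQ.ne_zero] at hle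
    refine le_trans ?_ hle
    compute_degree!

/-- (Lemma 3.2 of the paper.) Let `K` be a cubic field,
`ε, δ` units of `𝓞 K` with `ε + δ = n > 0`, `δ ∉ ℚ`, and let
`x³ + ax² + bx + c` (with `c = ±1`) be the minimal polynomial of `δ`.
If `n³ + an² + bn = 0`, then there are integers `n_ε, n_δ` with
`n = n_ε + n_δ` such that the minimal polynomials of `ε` and `δ` are
`x³ − (n + n_ε)x² + n·n_ε·x − 1` and `x³ − (n + n_δ)x² + n·n_δ·x + 1`
(as an unordered pair). -/
theorem sums_of_units_stmt_4 (K : Type*) [Field K] [NumberField K]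
    (hK : Module.finrank ℚ K = 3) (n : ℕ) (hn : 0 < n)
    (ε δ : (𝓞 K)ˣ) (hsum : (ε : 𝓞 K) + (δ : 𝓞 K) = (n : 𝓞 K))
    (hδ : ∀ q : ℚ, algebraMap ℚ K q ≠ ((δ : 𝓞 K) : K))
    (a b c : ℤ) (hc : c = 1 ∨ c = -1)
    (hmin : minpoly ℤ ((δ : 𝓞 K)) = X ^ 3 + C a * X ^ 2 + C b * X + C c)
    (hzero : (n : ℤ) ^ 3 + a * (n : ℤ) ^ 2 + b * (n : ℤ) = 0) :
    ∃ nε nδ : ℤ, (n : ℤ) = nε + nδ ∧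
      ({minpoly ℤ ((ε : 𝓞 K)), minpoly ℤ ((δ : 𝓞 K))} : Set ℤ[X]) =
        {X ^ 3 - C ((n : ℤ) + nε) * X ^ 2 + C ((n : ℤ) * nε) * X - 1,
         X ^ 3 - C ((n : ℤ) + nδ) * X ^ 2 + C ((n : ℤ) * nδ) * X + 1} := by
  have hn' : (n : ℤ) ≠ 0 := by exact_mod_cast hn.ne'
  have hb : b = -(n * (n + a)) := by
    apply mul_left_cancel₀ hn'
    linear_combination hzero
  have hε := minpoly_of_add_eq_natCast hsum hmin
  rw [hε, hmin]
  subst hb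
  rcases hc with rfl | rfl
  · refine ⟨2 * n + a, -a - n, by ring, ?_⟩
    congr 1
    · simp only [map_add, map_mul, map_neg, map_pow, map_ofNat, map_one]
      ring
    · congr 1
      simp only [map_add, map_sub, map_mul, map_neg, map_one]
      ring
  · refine ⟨-a - n, 2 * n + a, by ring, ?_⟩
    rw [Set.pair_comm]
    congr 1
    · simp only [map_add, map_sub, map_mul, map_neg, map_one]
      ring
    · congr 1
      simp only [map_add, map_mul, map_neg, map_pow, map_ofNat, map_one]
      ring
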